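/- arXiv:1509.02766 — 14 statements merged into one kernel-verified Lean document; each statement's English description precedes it below -/
import Mathlib

section
/- Let a₋ > 0 and a₊ > 0, and let d, s be real numbers. Let Θ₁ and Θ₃ each be either the function h or the identity function on ℝ. Then there exists a unique pair of real numbers (ε₁, ε₃) such that ε₃ − ε₁ = d and a₋·Θ₁(ε₁) + a₊·Θ₃(ε₃) = s. -/
/-- The function `h` from the paper: `h(ε) = ε` if `ε ≥ 0`, `h(ε) = sinh ε` if `ε < 0`. -/
noncomputable def hfun (ε : ℝ) : ℝ := if 0 ≤ ε then ε else Real.sinh ε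

theorem props_aux (Θ : ℝ → ℝ) (h : Θ = hfun ∨ Θ = id) :
    Continuous Θ ∧ StrictMono Θ ∧ Filter.Tendsto Θ Filter.atTop Filter.atTop ∧
      Filter.Tendsto Θ Filter.atBot Filter.atBot := by
  rcases h with rfl | rfl
  · refine ⟨?_, ?_, ?_, ?_⟩
    · unfold hfun
      refine Continuous.if_le continuous_id Real.continuous_sinh continuous_const continuous_id ?_
      intro x hx
      simp [← hx]
    · intro x y hxy
      unfold hfun
      split_ifs with h1 h2 h2
      · exact hxy
      · linarith
      · have : Real.sinh x < 0 := Real.sinh_neg_iff.2 (not_le.1 h1)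
        linarith
      · exact Real.sinh_lt_sinh.2 hxy
    · refine Filter.tendsto_id.congr' ?_
      filter_upwards [Filter.eventually_ge_atTop 0] with x hx
      simp [hfun, hx]
    · refine Filter.tendsto_atBot_mono (f := (id : ℝ → ℝ)) ?_ Filter.tendsto_id
      intro x
      unfold hfun
      split_ifs with h1
      · exact le_rfl
      · exact Real.sinh_le_self_iff.2 (not_le.1 h1).le
  · exact ⟨continuous_id, strictMono_id, Filter.tendsto_id, Filter.tendsto_id⟩

/-- Existence and uniqueness underlying the four Pre-Riemann solvers. -/
theorem stmt0 (am ap d s : ℝ) (ham : 0 < am) (hap : 0 < ap)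
    (Θ₁ Θ₃ : ℝ → ℝ)
    (hΘ₁ : Θ₁ = hfun ∨ Θ₁ = id) (hΘ₃ : Θ₃ = hfun ∨ Θ₃ = id) :
    ∃! ε : ℝ × ℝ, ε.2 - ε.1 = d ∧ am * Θ₁ ε.1 + ap * Θ₃ ε.2 = s := by
  obtain ⟨c1, m1, t1, b1⟩ := props_aux Θ₁ hΘ₁
  obtain ⟨c3, m3, t3, b3⟩ := props_aux Θ₃ hΘ₃
  have hc : Continuous (fun x => am * Θ₁ x + ap * Θ₃ (x + d)) := by fun_prop
  have hm : StrictMono (fun x => am * Θ₁ x + ap * Θ₃ (x + d)) := by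
    intro x y hxy
    have e1 := mul_lt_mul_of_pos_left (m1 hxy) ham
    have e3 := mul_lt_mul_of_pos_left (m3 (add_lt_add_left hxy d)) hap
    exact add_lt_add e1 e3
  have ht : Filter.Tendsto (fun x => am * Θ₁ x + ap * Θ₃ (x + d)) Filter.atTop Filter.atTop :=
    (t1.const_mul_atTop ham).atTop_add_atTop
      ((t3.comp (Filter.tendsto_atTop_add_const_right _ d Filter.tendsto_id)).const_mul_atTop hap)
  have hb : Filter.Tendsto (fun x => am * Θ₁ x + ap * Θ₃ (x + d)) Filter.atBot Filter.atBot :=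
    (b1.const_mul_atBot ham).atBot_add_atBot
      ((b3.comp (Filter.tendsto_atBot_add_const_right _ d Filter.tendsto_id)).const_mul_atBot hap)
  obtain ⟨x, hx⟩ := hc.surjective ht hb s
  refine ⟨(x, x + d), ⟨by simp, hx⟩, ?_⟩
  rintro ⟨y, z⟩ ⟨h1, h2⟩
  simp only at h1 h2
  obtain rfl : z = y + d := by linarith
  have : y = x := hm.injective (h2.trans hx.symm)
  rw [this]
end

section
/- Let a₋ > 0, a₊ > 0 and set δ = 2(a₊ − a₋)/(a₊ + a₋). Let δ₁ be a real number and suppose ε₁, ε₃ are real numbers satisfying ε₃ − ε₁ = −δ₁ and a₋·h(ε₁) + a₊·h(ε₃) = a₊·h(δ₁). Then |ε₁ − δ₁| = |ε₃| ≤ (1/2)|δ₁ δ|. Moreover, ε₁ has the same sign as δ₁ (in particular ε₁ = 0 iff δ₁ = 0), and ε₃ has the same sign as the product δ·δ₁. -/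
theorem sinh_le_mul_cosh {s : ℝ} (hs : 0 ≤ s) : Real.sinh s ≤ s * Real.cosh s := by
  have hd : ∀ x : ℝ, HasDerivAt (fun x : ℝ => x * Real.cosh x - Real.sinh x)
      (x * Real.sinh x) x := by
    intro x
    have := ((hasDerivAt_id x).mul (Real.hasDerivAt_cosh x)).sub (Real.hasDerivAt_sinh x)
    refine this.congr_deriv ?_
    simp only [id]
    ring
  have hm : MonotoneOn (fun x : ℝ => x * Real.cosh x - Real.sinh x) (Set.Ici 0) := by
    apply monotoneOn_of_deriv_nonneg (convex_Ici 0)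
    · exact fun x _ => (hd x).continuousAt.continuousWithinAt
    · exact fun x _ => (hd x).differentiableAt.differentiableWithinAt
    · intro x hx
      rw [interior_Ici] at hx
      rw [(hd x).deriv]
      exact mul_nonneg (le_of_lt hx) (Real.sinh_nonneg_iff.2 (le_of_lt hx))
  have := hm (Set.mem_Ici.2 le_rfl) (Set.mem_Ici.2 hs) hs
  simp at this
  linarith

theorem sinh_tangent {t w : ℝ} (ht : 0 ≤ t) (hw : 0 ≤ w) :
    Real.sinh t + w * Real.cosh t ≤ Real.sinh (t + w) := by
  rw [Real.sinh_add]
  have h1 := Real.one_le_cosh w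
  have h2 := Real.self_le_sinh_iff.2 hw
  have h3 := Real.sinh_nonneg_iff.2 ht
  have h4 := Real.cosh_pos t
  nlinarith [mul_nonneg h3 (sub_nonneg.2 h1), mul_nonneg h4.le (sub_nonneg.2 h2)]

theorem sinh_ratio {v k : ℝ} (hv : 0 ≤ v) (hk : 0 ≤ k) :
    (v + k) * Real.sinh v ≤ v * Real.sinh (v + k) := by
  have h1 := mul_le_mul_of_nonneg_left (sinh_tangent hv hk) hv
  have h2 := mul_le_mul_of_nonneg_left (sinh_le_mul_cosh hv) hk
  nlinarith

theorem two_sinh_le {t : ℝ} (ht : 0 ≤ t) : 2 * Real.sinh t ≤ t * (1 + Real.cosh t) := by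
  obtain ⟨s, rfl⟩ : ∃ s, t = 2 * s := ⟨t / 2, by ring⟩
  have hs : 0 ≤ s := by linarith
  rw [Real.sinh_two_mul, Real.cosh_two_mul]
  have h1 := sinh_le_mul_cosh hs
  have h2 := Real.cosh_sq s
  have h3 := mul_le_mul_of_nonneg_right h1 (Real.cosh_pos s).le
  have : 2 * s * (1 + (Real.cosh s ^ 2 + Real.sinh s ^ 2)) = 4 * (s * Real.cosh s * Real.cosh s) := by
    rw [show Real.sinh s ^ 2 = Real.cosh s ^ 2 - 1 by linarith]; ring
  rw [this]; linarith

/-- Rarefaction reflected from an incoming shock. -/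
theorem case_mixed {t w : ℝ} (ht : 0 ≤ t) (hw : 0 ≤ w) :
    (t + 2 * w) * Real.sinh t ≤ t * (w + Real.sinh (t + w)) := by
  have h1 := mul_le_mul_of_nonneg_left (sinh_tangent ht hw) ht
  have h2 := mul_le_mul_of_nonneg_left (two_sinh_le ht) hw
  nlinarith

/-- Shock reflected from an incoming shock. -/
theorem case_shock {e z a b : ℝ} (he : 0 < e) (hz : 0 < z) (ha : 0 < a) (hb : 0 < b)
    (h : a * Real.sinh (e + z) + b * Real.sinh z = b * Real.sinh e) :
    (a + b) * z ≤ e * (b - a) := by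
  have hp : 0 < Real.sinh (e + z) := Real.sinh_pos_iff.2 (by linarith)
  have hze : z < e := by
    rw [← Real.sinh_lt_sinh]
    nlinarith [mul_pos ha hp]
  obtain ⟨v, hv⟩ : ∃ v, v = (e - z) / 2 := ⟨_, rfl⟩
  have hv0 : 0 < v := by linarith
  have hee : e = (v + z) + v := by linarith
  have hzz : z = (v + z) - v := by ring
  have h1 : Real.sinh (e + z) = 2 * Real.sinh (v + z) * Real.cosh (v + z) := by
    rw [← Real.sinh_two_mul]; congr 1; linarith
  have h2 : Real.sinh e - Real.sinh z = 2 * Real.cosh (v + z) * Real.sinh v := by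
    have e1 : Real.sinh e = Real.sinh ((v + z) + v) := by rw [← hee]
    have e2 : Real.sinh z = Real.sinh ((v + z) - v) := by rw [← hzz]
    rw [e1, e2, Real.sinh_add, Real.sinh_sub]; ring
  have hc := Real.cosh_pos (v + z)
  have h3 : a * Real.sinh (v + z) = b * Real.sinh v := by
    have : (2 * Real.cosh (v + z)) * (a * Real.sinh (v + z))
        = (2 * Real.cosh (v + z)) * (b * Real.sinh v) := by
      linear_combination h - a * h1 + b * h2
    exact mul_left_cancel₀ (by positivity) this
  have h4 := mul_le_mul_of_nonneg_left (sinh_ratio hv0.le hz.le) ha.le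
  have h5 : 0 < Real.sinh v := Real.sinh_pos_iff.2 hv0
  have h6 : (a * (v + z)) * Real.sinh v ≤ (b * v) * Real.sinh v := by
    calc _ = a * ((v + z) * Real.sinh v) := by ring
      _ ≤ _ := h4
      _ = v * (a * Real.sinh (v + z)) := by ring
      _ = _ := by rw [h3]; ring
  have h7 := le_of_mul_le_mul_right h6 h5
  rw [hv] at h7
  linarith

theorem case_rar {e w a b : ℝ} (he : 0 < e) (hw : 0 < w) (hwe : w < e) (ha : 0 < a) (hb : 0 < b)
    (h : a * Real.sinh (e - w) = b * w + b * Real.sinh e) :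
    (a + b) * w ≤ e * (a - b) := by
  obtain ⟨t, ht⟩ : ∃ t, t = e - w := ⟨_, rfl⟩
  have ht0 : 0 < t := by linarith
  obtain rfl : e = t + w := by linarith
  rw [← ht] at h
  have h4 := mul_le_mul_of_nonneg_left (case_mixed ht0.le hw.le) hb.le
  have h5 : 0 < Real.sinh t := Real.sinh_pos_iff.2 ht0
  have h6 : (b * (t + 2 * w)) * Real.sinh t ≤ (a * t) * Real.sinh t := by
    linear_combination h4 - t * h
  have h7 := le_of_mul_le_mul_right h6 h5
  linarith

theorem hfun_nonneg {x : ℝ} (hx : 0 ≤ x) : hfun x = x := by simp [hfun, hx]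

theorem hfun_neg {x : ℝ} (hx : x < 0) : hfun x = Real.sinh x := by simp [hfun, not_le.2 hx]

theorem hfun_neg_lt {x : ℝ} (hx : x < 0) : hfun x < 0 := by
  rw [hfun_neg hx]; exact Real.sinh_neg_iff.2 hx

theorem key (a b d x y : ℝ) (ha : 0 < a) (hb : 0 < b) (h1 : x = y + d)
    (h2 : a * hfun x + b * hfun y = b * hfun d) :
    ((0 < x ∧ 0 < d) ∨ (x = 0 ∧ d = 0) ∨ (x < 0 ∧ d < 0)) ∧
    ((y = 0 ∧ d * (b - a) = 0) ∨ (0 < y ∧ (a + b) * y ≤ d * (b - a)) ∨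
      (y < 0 ∧ d * (b - a) ≤ (a + b) * y)) := by
  rcases lt_trichotomy d 0 with hd | hd | hd
  · have hx : x < 0 := by
      by_contra hx
      push Not at hx
      have hy : 0 < y := by linarith
      rw [hfun_nonneg hx, hfun_nonneg hy.le] at h2
      nlinarith [hfun_neg_lt hd, mul_pos hb hy, mul_nonneg ha.le hx,
        mul_neg_of_pos_of_neg hb (hfun_neg_lt hd)]
    refine ⟨Or.inr (Or.inr ⟨hx, hd⟩), ?_⟩
    rcases lt_trichotomy y 0 with hy | hy | hy
    · right; right
      refine ⟨hy, ?_⟩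
      rw [hfun_neg hx, hfun_neg hy, hfun_neg hd] at h2
      have := case_shock (e := -d) (z := -y) (by linarith) (by linarith) ha hb (by
        rw [show -d + -y = -x by linarith]
        simp only [Real.sinh_neg]
        linarith)
      linarith
    · left
      subst hy
      obtain rfl : x = d := by linarith
      rw [hfun_nonneg le_rfl] at h2
      have : (b - a) * hfun x = 0 := by linarith
      rcases mul_eq_zero.1 this with h | h
      · simp [h]
      · linarith [hfun_neg_lt hd]
    · right; left
      refine ⟨hy, ?_⟩
      rw [hfun_neg hx, hfun_nonneg hy.le, hfun_neg hd] at h2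
      have := case_rar (e := -d) (w := y) (by linarith) hy (by linarith) ha hb (by
        rw [show -d - y = -x by linarith]
        simp only [Real.sinh_neg]
        linarith)
      linarith
  · subst hd
    obtain rfl : x = y := by linarith
    have hx : x = 0 := by
      rw [hfun_nonneg le_rfl] at h2
      have : (a + b) * hfun x = 0 := by linarith
      have h0 : hfun x = 0 := by
        rcases mul_eq_zero.1 this with h | h
        · linarith
        · exact h
      rcases lt_or_ge x 0 with h | h
      · linarith [hfun_neg_lt h]
      · rwa [hfun_nonneg h] at h0
    simp [hx]
  · have hx : 0 < x := by
      by_contra hx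
      push Not at hx
      have hy : y < 0 := by linarith
      have hx' : hfun x ≤ 0 := by
        rcases hx.lt_or_eq with h | h
        · exact (hfun_neg_lt h).le
        · simp [h, hfun]
      rw [hfun_nonneg hd.le] at h2
      linarith [mul_pos hb hd, mul_nonpos_of_nonneg_of_nonpos ha.le hx',
        mul_neg_of_pos_of_neg hb (hfun_neg_lt hy)]
    refine ⟨Or.inl ⟨hx, hd⟩, ?_⟩
    rw [hfun_nonneg hx.le, hfun_nonneg hd.le] at h2
    subst h1
    rcases lt_trichotomy y 0 with hy | hy | hy
    · right; right
      refine ⟨hy, ?_⟩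
      rw [hfun_neg hy] at h2
      have := mul_le_mul_of_nonneg_left (Real.sinh_le_self_iff.2 hy.le) hb.le
      linarith
    · left
      subst hy
      rw [hfun_nonneg le_rfl] at h2
      exact ⟨rfl, by linarith⟩
    · right; left
      refine ⟨hy, ?_⟩
      rw [hfun_nonneg hy.le] at h2
      linarith

/-- Interaction estimate for a 1-wave hitting a composite wave (Accurate solver). -/
theorem stmt1 (am ap δ δ₁ ε₁ ε₃ : ℝ) (ham : 0 < am) (hap : 0 < ap)
    (hδ : δ = 2 * (ap - am) / (ap + am))
    (h1 : ε₃ - ε₁ = -δ₁)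
    (h2 : am * hfun ε₁ + ap * hfun ε₃ = ap * hfun δ₁) :
    |ε₁ - δ₁| = |ε₃| ∧ |ε₃| ≤ (1/2) * |δ₁ * δ| ∧
    Real.sign ε₁ = Real.sign δ₁ ∧ Real.sign ε₃ = Real.sign (δ * δ₁) := by
  have hs : 0 < am + ap := by linarith
  obtain ⟨hk1, hk2⟩ := key am ap δ₁ ε₁ ε₃ ham hap (by linarith) h2
  have hD : δ₁ * (ap - am) = (am + ap) * (δ₁ * δ / 2) := by
    rw [hδ]
    have : ap + am ≠ 0 := by linarith
    field_simp
    ring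
  rw [hD] at hk2
  refine ⟨by congr 1; linarith, ?_, ?_, ?_⟩
  · rcases hk2 with ⟨h, _⟩ | ⟨h, h'⟩ | ⟨h, h'⟩
    · rw [h, abs_zero]; positivity
    · have := le_of_mul_le_mul_left h' hs
      rw [abs_of_pos h]
      linarith [le_abs_self (δ₁ * δ)]
    · have := le_of_mul_le_mul_left h' hs
      rw [abs_of_neg h]
      linarith [neg_abs_le (δ₁ * δ)]
  · rcases hk1 with ⟨h, h'⟩ | ⟨h, h'⟩ | ⟨h, h'⟩
    · rw [Real.sign_of_pos h, Real.sign_of_pos h']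
    · rw [h, h']
    · rw [Real.sign_of_neg h, Real.sign_of_neg h']
  · rw [mul_comm δ δ₁]
    rcases hk2 with ⟨h, h'⟩ | ⟨h, h'⟩ | ⟨h, h'⟩
    · rcases mul_eq_zero.1 h' with h'' | h''
      · linarith
      · rw [h, show δ₁ * δ = 0 by linarith]
    · have := le_of_mul_le_mul_left h' hs
      rw [Real.sign_of_pos h, Real.sign_of_pos (by linarith)]
    · have := le_of_mul_le_mul_left h' hs
      rw [Real.sign_of_neg h, Real.sign_of_neg (by linarith)]
end

section
/- Let a₋ > 0, a₊ > 0 and set δ = 2(a₊ − a₋)/(a₊ + a₋). Let ρ > 0, set C₀ = sinh ρ / ρ, and let δ₁ be a real number with |δ₁| ≤ ρ. Suppose ε₁, ε₃ are real numbers satisfying ε₃ − ε₁ = −δ₁ and a₋·h(ε₁) + a₊·ε₃ = a₊·h(δ₁). Then |ε₁ − δ₁| = |ε₃|, and |ε₃| ≤ (C₀/2)|δ₁ δ| if δ₁ < 0 and δ > 0, while |ε₃| ≤ (1/2)|δ₁ δ| in all other cases. -/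
lemma aux_sinh_mul (k d : ℝ) (hk : 0 ≤ k) (hk1 : k ≤ 1) (hd : 0 ≤ d) :
    Real.sinh (k * d) ≤ k * Real.sinh d := by
  refine hasSum_le (fun n => ?_) (Real.hasSum_sinh (k * d)) ((Real.hasSum_sinh d).mul_left k)
  rw [mul_pow, ← mul_div_assoc]
  have : k ^ (2 * n + 1) ≤ k := by
    simpa using pow_le_pow_of_le_one hk hk1 (show 1 ≤ 2 * n + 1 by omega)
  gcongr

lemma aux_key (k d : ℝ) (hk : 0 ≤ k) (hk1 : k ≤ 1) (hd : 0 ≤ d) :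
    (2 - k) * Real.sinh (k * d) + (k ^ 2 * d - k * d) ≤ k * Real.sinh d := by
  refine hasSum_le (fun n => ?_)
    (((Real.hasSum_sinh (k * d)).mul_left (2 - k)).add (hasSum_ite_eq 0 (k ^ 2 * d - k * d)))
    ((Real.hasSum_sinh d).mul_left k)
  rcases Nat.eq_zero_or_pos n with rfl | hn
  · simp
    nlinarith
  · rw [if_neg (by omega), add_zero, mul_pow, ← mul_div_assoc, ← mul_div_assoc, ← mul_assoc]
    have h2 : k ^ (2 * n + 1) ≤ k ^ 2 := pow_le_pow_of_le_one hk hk1 (by omega)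
    have : (2 - k) * k ^ (2 * n + 1) ≤ k := by
      have h3 : (2 - k) * k ^ (2 * n + 1) ≤ (2 - k) * k ^ 2 :=
        mul_le_mul_of_nonneg_left h2 (by linarith)
      nlinarith [mul_nonneg hk (sq_nonneg (k - 1))]
    gcongr

/-- Interaction estimate for a small 1-wave hitting a composite wave (Simplified solver `R_{LI}`). -/
theorem stmt3 (am ap δ ρ C₀ δ₁ ε₁ ε₃ : ℝ) (ham : 0 < am) (hap : 0 < ap)
    (hδ : δ = 2 * (ap - am) / (ap + am))
    (hρ : 0 < ρ) (hC₀ : C₀ = Real.sinh ρ / ρ) (hδ₁ : |δ₁| ≤ ρ)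
    (h1 : ε₃ - ε₁ = -δ₁)
    (h2 : am * hfun ε₁ + ap * ε₃ = ap * hfun δ₁) :
    |ε₁ - δ₁| = |ε₃| ∧
    ((δ₁ < 0 ∧ 0 < δ) → |ε₃| ≤ (C₀ / 2) * |δ₁ * δ|) ∧
    (¬(δ₁ < 0 ∧ 0 < δ) → |ε₃| ≤ (1/2) * |δ₁ * δ|) := by
  have hs : 0 < ap + am := by linarith
  have hδs : δ * (ap + am) = 2 * (ap - am) := by rw [hδ]; field_simp
  refine ⟨by congr 1; linarith, ?_⟩
  obtain rfl : ε₃ = ε₁ - δ₁ := by linarith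
  by_cases hd : 0 ≤ δ₁
  · refine ⟨fun h => absurd h.1 (not_lt.mpr hd), fun _ => ?_⟩
    have he : 0 ≤ ε₁ := by
      by_contra hc
      simp only [hfun, if_pos hd, if_neg hc] at h2
      push Not at hc
      have := Real.sinh_neg_iff.mpr hc
      nlinarith [mul_pos ham (neg_pos.mpr this), mul_pos hap (neg_pos.mpr hc), mul_nonneg hap.le hd]
    simp only [hfun, if_pos hd, if_pos he] at h2
    have : ε₁ - δ₁ = (1/2) * (δ₁ * δ) := by
      apply mul_right_cancel₀ hs.ne'
      linear_combination h2 - δ₁ / 2 * hδs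
    rw [this, abs_mul]
    norm_num
  · have he : ¬ 0 ≤ ε₁ := by
      intro he
      simp only [hfun, if_neg hd, if_pos he] at h2
      push Not at hd
      have := Real.sinh_neg_iff.mpr hd
      nlinarith [mul_pos hap (neg_pos.mpr this), mul_pos hap (neg_pos.mpr hd), mul_nonneg hap.le he,
        mul_nonneg ham.le he]
    simp only [hfun, if_neg hd, if_neg he] at h2
    push Not at hd he
    obtain ⟨d, rfl⟩ : ∃ d, δ₁ = -d := ⟨-δ₁, by ring⟩
    obtain ⟨x, rfl⟩ : ∃ x, ε₁ = -x := ⟨-ε₁, by ring⟩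
    have hd0 : 0 < d := by linarith
    have hx0 : 0 < x := by linarith
    rw [abs_neg, abs_of_pos hd0] at hδ₁
    rw [Real.sinh_neg, Real.sinh_neg] at h2
    have hsd := Real.sinh_pos_iff.mpr hd0
    constructor
    · rintro ⟨-, hδ0⟩
      have hlt : am < ap := by nlinarith [mul_pos hδ0 hs]
      have hxd : d ≤ x := by
        by_contra hc
        push Not at hc
        have := Real.sinh_lt_sinh.mpr hc
        nlinarith [mul_pos ham (sub_pos.mpr this), mul_pos hap (sub_pos.mpr hc),
          mul_pos (sub_pos.mpr hlt) hsd]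
      have hmono := Real.sinh_sub_id_strictMono.monotone hxd
      have hA : Real.sinh d ≤ C₀ * d := by
        have := aux_sinh_mul (d / ρ) ρ (by positivity) ((div_le_one hρ).mpr hδ₁) hρ.le
        rw [div_mul_cancel₀ _ hρ.ne'] at this
        rw [hC₀]
        calc _ ≤ _ := this
          _ = _ := by ring
      have ht : x - d ≤ δ / 2 * Real.sinh d := by
        refine le_of_mul_le_mul_right ?_ hs
        have : δ / 2 * Real.sinh d * (ap + am) = (ap - am) * Real.sinh d := by
          linear_combination Real.sinh d / 2 * hδs
        rw [this]
        nlinarith [mul_le_mul_of_nonneg_left hmono ham.le]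
      rw [abs_of_nonpos (by linarith), abs_of_nonpos (by nlinarith)]
      nlinarith [mul_le_mul_of_nonneg_left hA hδ0.le]
    · intro hn
      have hδ0 : δ ≤ 0 := by
        by_contra hc
        exact hn ⟨hd, not_le.mp hc⟩
      have hle : ap ≤ am := by nlinarith [mul_nonneg (neg_nonneg.mpr hδ0) hs.le]
      have hxd : x ≤ d := by
        by_contra hc
        push Not at hc
        have := Real.sinh_lt_sinh.mpr hc
        nlinarith [mul_pos ham (sub_pos.mpr this), mul_pos hap (sub_pos.mpr hc),
          mul_nonneg (sub_nonneg.mpr hle) hsd.le]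
      obtain ⟨k, hk⟩ : ∃ k, k = 2 * ap / (ap + am) := ⟨_, rfl⟩
      have hks : k * (ap + am) = 2 * ap := by rw [hk]; field_simp
      have hk0 : 0 < k := by rw [hk]; positivity
      have hk1 : k ≤ 1 := by rw [hk, div_le_one hs]; linarith
      have hkδ : δ = 2 * (k - 1) := by
        apply mul_right_cancel₀ hs.ne'
        linear_combination hδs - 2 * hks
      have hkey := aux_key k d hk0.le hk1 hd0.le
      have hkey2 : am * Real.sinh (k * d) + ap * (k * d) ≤ ap * (Real.sinh d + d) := by
        have h3 := mul_le_mul_of_nonneg_left hkey (show 0 ≤ (ap + am) / 2 by linarith)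
        linear_combination h3 + (1/2) * (Real.sinh d + d + Real.sinh (k * d) - k * d) * hks
      have hxk : k * d ≤ x := by
        by_contra hc
        push Not at hc
        have := Real.sinh_lt_sinh.mpr hc
        nlinarith [mul_pos ham (sub_pos.mpr this), mul_pos hap (sub_pos.mpr hc)]
      rw [abs_of_nonneg (by linarith), abs_of_nonneg (by nlinarith), hkδ]
      linarith
end

section
/- Let a₋ > 0, a₊ > 0 and set δ = 2(a₊ − a₋)/(a₊ + a₋). Let ρ > 0, set C₀ = sinh ρ / ρ, and let δ₃ be a real number with |δ₃| ≤ ρ. Suppose ε₁, ε₃ are real numbers satisfying ε₃ − ε₁ = δ₃ and a₋·ε₁ + a₊·h(ε₃) = a₋·h(δ₃). Then |ε₃ − δ₃| = |ε₁|, and |ε₁| ≤ (C₀/2)|δ₃ δ| if δ₃ < 0 and δ < 0, while |ε₁| ≤ (1/2)|δ₃ δ| in all other cases. -/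
theorem aux_sinh (t x : ℝ) (ht : 0 ≤ t) (ht1 : t ≤ 1) (hx : 0 ≤ x) :
    Real.sinh (t * x) - t * x ≤ t ^ 2 * (Real.sinh x - x) := by
  have H := ((Real.hasSum_sinh x).mul_left (t ^ 2)).sub (Real.hasSum_sinh (t * x))
  have := le_hasSum H 0 (by
    intro j hj
    have h3 : t ^ (2 * j + 1) ≤ t ^ 2 := pow_le_pow_of_le_one ht ht1 (by omega)
    have h4 : 0 ≤ x ^ (2 * j + 1) / ((2 * j + 1).factorial : ℝ) := by positivity
    rw [mul_pow, mul_div_assoc, ← sub_mul]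
    exact mul_nonneg (by linarith) h4)
  simp at this
  linarith

/-- Interaction estimate for a small 3-wave hitting a composite wave (Simplified solver `R_{IL}`). -/
theorem stmt4 (am ap δ ρ C₀ δ₃ ε₁ ε₃ : ℝ) (ham : 0 < am) (hap : 0 < ap)
    (hδ : δ = 2 * (ap - am) / (ap + am))
    (hρ : 0 < ρ) (hC₀ : C₀ = Real.sinh ρ / ρ) (hδ₃ : |δ₃| ≤ ρ)
    (h1 : ε₃ - ε₁ = δ₃)
    (h2 : am * ε₁ + ap * hfun ε₃ = am * hfun δ₃) :
    |ε₃ - δ₃| = |ε₁| ∧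
    ((δ₃ < 0 ∧ δ < 0) → |ε₁| ≤ (C₀ / 2) * |δ₃ * δ|) ∧
    (¬(δ₃ < 0 ∧ δ < 0) → |ε₁| ≤ (1/2) * |δ₃ * δ|) := by
  have hs : 0 < ap + am := by linarith
  have e1 : ε₁ = ε₃ - δ₃ := by linarith
  subst e1
  refine ⟨rfl, ?_⟩
  unfold hfun at h2
  rcases le_or_gt 0 δ₃ with h | h
  · rw [if_pos h] at h2
    refine ⟨fun h' => by linarith [h'.1], fun _ => ?_⟩
    have h3 : 0 ≤ ε₃ := by
      by_contra hc
      rw [if_neg hc] at h2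
      push Not at hc
      have := Real.sinh_neg_iff.2 hc
      nlinarith [mul_nonneg ham.le h, mul_pos ham (neg_pos.2 hc), mul_pos hap (neg_pos.2 this)]
    rw [if_pos h3] at h2
    have : ε₃ - δ₃ = -((1 / 2) * (δ₃ * δ)) := by
      rw [hδ]; field_simp; linarith
    rw [this, abs_neg, abs_mul]
    norm_num
  · rw [if_neg (not_le.2 h)] at h2
    have hsd := Real.sinh_neg_iff.2 h
    have h3 : ε₃ < 0 := by
      by_contra hc
      push Not at hc
      rw [if_pos hc] at h2
      nlinarith [mul_nonneg ham.le hc, mul_nonneg hap.le hc, mul_pos ham (neg_pos.2 h),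
        mul_pos ham (neg_pos.2 hsd)]
    rw [if_neg (not_le.2 h3)] at h2
    obtain ⟨x, rfl⟩ : ∃ x, δ₃ = -x := ⟨-δ₃, by ring⟩
    obtain ⟨y, rfl⟩ : ∃ y, ε₃ = -y := ⟨-ε₃, by ring⟩
    rw [Real.sinh_neg, Real.sinh_neg] at h2
    have hx : 0 < x := by linarith
    have hy : 0 < y := by linarith
    rw [abs_neg, abs_of_pos hx] at hδ₃
    have mono := Real.sinh_sub_id_strictMono
    constructor
    · rintro ⟨-, hd⟩
      have hlt : ap < am := by
        by_contra hc
        push Not at hc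
        have : 0 ≤ δ := by rw [hδ]; exact div_nonneg (by linarith) hs.le
        linarith
      have hxy : x ≤ y := by
        by_contra hc
        push Not at hc
        have := Real.sinh_lt_sinh.2 hc
        have h5 : 0 < Real.sinh x := Real.sinh_pos_iff.2 hx
        nlinarith [mul_pos ham (sub_pos.2 hc), mul_pos hap (sub_pos.2 this),
          mul_pos h5 (sub_pos.2 hlt)]
      have hm := mono.monotone hxy
      have hC : Real.sinh x ≤ C₀ * x := by
        have ha := aux_sinh (x / ρ) ρ (by positivity) ((div_le_one hρ).2 hδ₃) hρ.le
        rw [div_mul_cancel₀ _ hρ.ne'] at ha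
        have ht0 : 0 < x / ρ := by positivity
        have ht1 : x / ρ ≤ 1 := (div_le_one hρ).2 hδ₃
        have hg : 0 ≤ Real.sinh ρ - ρ := by linarith [Real.self_le_sinh_iff.2 hρ.le]
        have : (x / ρ) ^ 2 * (Real.sinh ρ - ρ) ≤ (x / ρ) * (Real.sinh ρ - ρ) :=
          mul_le_mul_of_nonneg_right (by nlinarith) hg
        have h6 : (x / ρ) * (Real.sinh ρ - ρ) = C₀ * x - x := by
          rw [hC₀]; field_simp
        linarith
      have h7 : |(-y) - (-x)| = y - x := by
        rw [abs_of_nonpos (by linarith)]; ring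
      have h8 : |(-x) * δ| = x * (2 * (am - ap) / (ap + am)) := by
        rw [abs_of_pos (by nlinarith), hδ]; ring
      rw [h7, h8]
      have h9 : C₀ / 2 * (x * (2 * (am - ap) / (ap + am))) = (C₀ * x) * (am - ap) / (ap + am) := by
        field_simp
      rw [h9, le_div_iff₀ hs]
      nlinarith [mul_le_mul_of_nonneg_left hm hap.le, mul_le_mul_of_nonneg_right hC (sub_pos.2 hlt).le]
    · intro hd
      have hd : 0 ≤ δ := by
        by_contra hc
        exact hd ⟨h, not_le.1 hc⟩
      have hle : am ≤ ap := by
        by_contra hc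
        push Not at hc
        have : δ < 0 := by rw [hδ]; exact div_neg_of_neg_of_pos (by linarith) hs
        linarith
      have hyx : y ≤ x := by
        by_contra hc
        push Not at hc
        have := Real.sinh_lt_sinh.2 hc
        have h5 : 0 < Real.sinh x := Real.sinh_pos_iff.2 hx
        nlinarith [mul_pos ham (sub_pos.2 hc), mul_pos hap (sub_pos.2 this),
          mul_nonneg h5.le (sub_nonneg.2 hle)]
      have h7 : |(-y) - (-x)| = x - y := by
        rw [abs_of_nonneg (by linarith)]; ring
      have h8 : |(-x) * δ| = x * δ := by
        rw [abs_mul, abs_neg, abs_of_pos hx, abs_of_nonneg hd]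
      rw [h7, h8]
      obtain ⟨t, ht⟩ : ∃ t, t = 2 * am / (ap + am) := ⟨_, rfl⟩
      have htd : x - (1 / 2) * (x * δ) = t * x := by
        rw [hδ, ht]; field_simp; ring
      have hts : t * (ap + am) = 2 * am := by rw [ht]; field_simp
      have ht0 : 0 ≤ t := by rw [ht]; positivity
      have ht1 : t ≤ 1 := by rw [ht, div_le_one hs]; linarith
      have ha := aux_sinh t x ht0 ht1 hx.le
      have hg : 0 ≤ Real.sinh x - x := by linarith [Real.self_le_sinh_iff.2 hx.le]
      have hat : ap * t ^ 2 ≤ am := by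
        rw [ht, div_pow, ← mul_div_assoc, div_le_iff₀ (by positivity)]
        nlinarith [mul_nonneg ham.le (sq_nonneg (ap - am))]
      have hb : ap * (Real.sinh (t * x) - t * x) ≤ am * (Real.sinh x - x) := by
        nlinarith [mul_le_mul_of_nonneg_left ha hap.le, mul_le_mul_of_nonneg_right hat hg]
      have hty : t * x ≤ y := by
        by_contra hc
        push Not at hc
        have hm := Real.sinh_lt_sinh.2 hc
        have hk : t * x * (ap + am) = 2 * am * x := by rw [← hts]; ring
        nlinarith [mul_pos ham (sub_pos.2 hc), mul_pos hap (sub_pos.2 hm)]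
      linarith
end

section
/- Let α₁ and β₃ be real numbers, and suppose ε₁, ε₃ are real numbers satisfying ε₃ − ε₁ = β₃ − α₁ and h(ε₁) + h(ε₃) = h(α₁) + h(β₃). Then ε₁ = α₁ and ε₃ = β₃. -/
theorem hfun_strictMono : StrictMono hfun := by
  intro a b hab
  unfold hfun
  split_ifs with ha hb hb
  · exact hab
  · exact absurd (ha.trans hab.le) hb
  · exact lt_of_lt_of_le (Real.sinh_neg_iff.2 (not_le.1 ha)) hb
  · exact Real.sinh_lt_sinh.2 hab

/-- Waves of different families cross without changing their strengths. -/
theorem stmt5 (α₁ β₃ ε₁ ε₃ : ℝ)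
    (h1 : ε₃ - ε₁ = β₃ - α₁)
    (h2 : hfun ε₁ + hfun ε₃ = hfun α₁ + hfun β₃) :
    ε₁ = α₁ ∧ ε₃ = β₃ := by
  rcases lt_trichotomy ε₁ α₁ with h | h | h
  · have a := hfun_strictMono h
    have b := hfun_strictMono (show ε₃ < β₃ by linarith)
    linarith
  · exact ⟨h, by linarith⟩
  · have a := hfun_strictMono h
    have b := hfun_strictMono (show β₃ < ε₃ by linarith)
    linarith
end

section
/- Let α < 0 and β < 0 be real numbers, and suppose ε₁, ε₃ are real numbers satisfying ε₃ − ε₁ = α + β and h(ε₁) + h(ε₃) = h(α) + h(β). Then ε₁ > 0, ε₃ < 0, and |ε₃| > max(|α|, |β|). -/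
theorem hfun_mono {x y : ℝ} (hxy : x ≤ y) : hfun x ≤ hfun y := by
  unfold hfun
  split_ifs with h1 h2 h2
  · exact hxy
  · linarith
  · have := Real.sinh_neg_iff.2 (not_le.1 h1)
    linarith
  · exact Real.sinh_le_sinh.2 hxy

theorem hfun_aux (α β ε₁ ε₃ : ℝ) (hα : α < 0) (hβ : β < 0)
    (h1 : ε₃ - ε₁ = α + β)
    (h2 : hfun ε₁ + hfun ε₃ = hfun α + hfun β) : ε₃ < α := by
  by_contra hc
  have e1 : -β ≤ ε₁ := by linarith
  have m1 := hfun_mono e1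
  have m2 := hfun_mono (not_lt.1 hc)
  have e2 : hfun (-β) = -β := if_pos (by linarith)
  have e3 : hfun β = Real.sinh β := if_neg (not_le.2 hβ)
  have := Real.sinh_neg_iff.2 hβ
  linarith

/-- Interaction of two shocks of the same family: the reflected wave is a rarefaction and the
transmitted wave is a shock stronger than each incoming shock. -/
theorem stmt6 (α β ε₁ ε₃ : ℝ) (hα : α < 0) (hβ : β < 0)
    (h1 : ε₃ - ε₁ = α + β)
    (h2 : hfun ε₁ + hfun ε₃ = hfun α + hfun β) :
    0 < ε₁ ∧ ε₃ < 0 ∧ |ε₃| > max |α| |β| := by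
  have k1 := hfun_aux α β ε₁ ε₃ hα hβ h1 h2
  have k2 := hfun_aux β α ε₁ ε₃ hβ hα (by linarith) (by linarith)
  have k3 : ε₃ < 0 := k1.trans hα
  refine ⟨?_, k3, ?_⟩
  · by_contra hc
    have m1 := hfun_mono (not_lt.1 hc)
    have m2 := hfun_mono (show ε₃ ≤ α + β by linarith)
    have e0 : hfun 0 = 0 := if_pos le_rfl
    have e1 : hfun α = Real.sinh α := if_neg (not_le.2 hα)
    have e2 : hfun β = Real.sinh β := if_neg (not_le.2 hβ)
    have e3 : hfun (α + β) = Real.sinh (α + β) := if_neg (by linarith)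
    rw [Real.sinh_add] at e3
    have s1 := Real.sinh_neg_iff.2 hα
    have s2 := Real.sinh_neg_iff.2 hβ
    have c1 := Real.one_lt_cosh.2 hα.ne
    have c2 := Real.one_lt_cosh.2 hβ.ne
    nlinarith
  · rw [abs_of_neg k3, abs_of_neg hα, abs_of_neg hβ]
    exact max_lt (by linarith) (by linarith)
end

section
/- Let α and β be real numbers with α < 0 < β, and suppose ε₁, ε₃ are real numbers satisfying ε₃ − ε₁ = α + β and h(ε₁) + h(ε₃) = h(α) + h(β). Then ε₁ ≤ 0 and |ε₁| ≤ c(α)·min(|α|, β); moreover max(ε₃, 0) ≤ β and max(−ε₃, 0) ≤ −α, i.e. both the amount of shock and the amount of rarefaction of the interacting family decrease across the interaction. -/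
/-- The function `c` from the paper: `c(z) = (cosh z − 1)/(cosh z + 1)`. -/
noncomputable def cfun (z : ℝ) : ℝ := (Real.cosh z - 1) / (Real.cosh z + 1)

lemma aux_tangent (u v : ℝ) (hu : 0 ≤ u) (huv : u ≤ v) :
    Real.sinh v - Real.sinh u ≤ (v - u) * Real.cosh v := by
  rcases huv.eq_or_lt with rfl | h
  · simp
  obtain ⟨c, hc, hs⟩ := exists_deriv_eq_slope Real.sinh h Real.continuous_sinh.continuousOn
    Real.differentiable_sinh.differentiableOn
  rw [Real.deriv_sinh, eq_div_iff (by linarith)] at hs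
  have h3 : Real.cosh c ≤ Real.cosh v := by
    rw [Real.cosh_le_cosh, abs_of_nonneg (by linarith [hc.1]), abs_of_nonneg (by linarith)]
    exact hc.2.le
  nlinarith

/-- Interaction of a shock with a rarefaction of the same family: the reflected wave is a
shock with strength controlled by `c(α)`, and both the amounts of shock and of rarefaction
of the interacting family decrease. -/
theorem stmt7 (α β ε₁ ε₃ : ℝ) (hα : α < 0) (hβ : 0 < β)
    (h1 : ε₃ - ε₁ = α + β)
    (h2 : hfun ε₁ + hfun ε₃ = hfun α + hfun β) :
    ε₁ ≤ 0 ∧ |ε₁| ≤ cfun α * min |α| β ∧ max ε₃ 0 ≤ β ∧ max (-ε₃) 0 ≤ -α := by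
  have hαv : hfun α = Real.sinh α := by simp [hfun, hα]
  have hβv : hfun β = β := by simp [hfun, hβ.le]
  rw [hαv, hβv] at h2
  have hle : ∀ y, hfun y ≤ y := by
    intro y
    unfold hfun
    split_ifs with h
    · exact le_rfl
    · exact Real.sinh_le_self_iff.2 (by linarith)
  have e1 : ε₁ ≤ 0 := by
    by_contra! hpos
    have h11 : hfun ε₁ = ε₁ := by simp [hfun, hpos.le]
    rw [h11] at h2
    by_cases h3 : 0 ≤ ε₃
    · have : hfun ε₃ = ε₃ := by simp [hfun, h3]
      have := Real.sinh_le_self_iff.2 hα.le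
      linarith
    · have h33 : hfun ε₃ = Real.sinh ε₃ := by simp [hfun, h3]
      have := Real.sinh_sub_id_strictMono (show α < ε₃ by linarith)
      simp only at this
      linarith
  have h11 : hfun ε₁ = Real.sinh ε₁ := by
    rcases e1.eq_or_lt with h | h
    · simp [hfun, h]
    · simp [hfun, h]
  rw [h11] at h2
  obtain ⟨a, rfl⟩ : ∃ a, α = -a := ⟨-α, by simp⟩
  obtain ⟨x, rfl⟩ : ∃ x, ε₁ = -x := ⟨-ε₁, by simp⟩
  have ha : 0 < a := by linarith
  have hx : 0 ≤ x := by linarith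
  have hC := Real.one_lt_cosh.2 ha.ne'
  obtain ⟨c, hc⟩ : ∃ c, c = cfun (-a) := ⟨_, rfl⟩
  have hcm : c * (Real.cosh a + 1) = Real.cosh a - 1 := by
    rw [hc, cfun, Real.cosh_neg]
    field_simp
  have hc0 : 0 ≤ c := by
    by_contra! h
    nlinarith
  have hc1 : c ≤ 1 := by
    by_contra! h
    nlinarith
  simp only [Real.sinh_neg] at h2
  have b1 : x ≤ c * a := by
    by_contra! h
    have t := aux_tangent (c * a) a (by positivity) (by nlinarith)
    have s := Real.sinh_lt_sinh.2 h
    have := hle ε₃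
    have e : (a - c * a) * Real.cosh a = a + c * a := by linear_combination (-a) * hcm
    linarith
  have b2 : x ≤ c * β := by
    rcases le_total a β with hab | hab
    · nlinarith
    by_contra! h
    have h0 : 0 ≤ c * β := by positivity
    have t := aux_tangent (a + c * β - β) a (by linarith) (by nlinarith)
    have h3 : ε₃ < -(a + c * β - β) := by linarith
    have s := Real.sinh_lt_sinh.2 h3
    rw [Real.sinh_neg] at s
    have h33 : hfun ε₃ = Real.sinh ε₃ := by
      have : ¬ 0 ≤ ε₃ := by linarith
      simp [hfun, this]
    have e : (a - (a + c * β - β)) * Real.cosh a = β + c * β := by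
      linear_combination (-β) * hcm
    have := Real.self_le_sinh_iff.2 hx
    linarith
  have b3 : c * β ≤ β := by nlinarith
  refine ⟨e1, ?_, max_le (by linarith) hβ.le, max_le (by linarith) (by linarith)⟩
  rw [← hc, abs_neg, abs_neg, abs_of_nonneg hx, abs_of_pos ha]
  rcases min_choice a β with h | h <;> rw [h] <;> assumption
end

section
/- Let m > 0 and let ξ satisfy 1 ≤ ξ ≤ 1/c(m). Let α, β be real numbers with α < 0 < β and |α| ≤ m, and suppose ε₁, ε₃ are real numbers satisfying ε₃ − ε₁ = α + β and h(ε₁) + h(ε₃) = h(α) + h(β). Then ξ·|ε₁| + w·|ε₃| − ξ·|α| − β + ξ(ξ − 1)|ε₁| ≤ 0, where w = ξ if ε₃ < 0 and w = 1 if ε₃ ≥ 0. -/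
theorem sinh_sub_le_aux (a b : ℝ) (hb : 0 ≤ b) (hab : b ≤ a) :
    Real.sinh a - Real.sinh b ≤ Real.cosh a * (a - b) := by
  refine (convex_Icc b a).image_sub_le_mul_sub_of_deriv_le
    Real.continuous_sinh.continuousOn Real.differentiable_sinh.differentiableOn ?_
    b ⟨le_rfl, hab⟩ a ⟨hab, le_rfl⟩ hab
  intro x hx
  rw [interior_Icc] at hx
  rw [Real.deriv_sinh, Real.cosh_le_cosh, abs_of_nonneg (by linarith [hx.1]),
    abs_of_nonneg (by linarith)]
  exact hx.2.le

theorem core_aux (ξ a b e : ℝ) (hξ : 1 ≤ ξ) (hb : 0 ≤ b) (he : 0 ≤ e)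
    (hc : (ξ - 1) * (Real.cosh a - 1) ≤ 2)
    (h : Real.sinh e + e + (Real.sinh b - b) = Real.sinh a - a) :
    (ξ - 1) * e + b ≤ a := by
  have hse : e ≤ Real.sinh e := Real.self_le_sinh_iff.2 he
  have hab : b ≤ a := Real.sinh_sub_id_strictMono.le_iff_le.1 (by linarith)
  have h3 := sinh_sub_le_aux a b hb hab
  have h4 : 2 * e ≤ (Real.cosh a - 1) * (a - b) := by linarith
  have h5 := mul_le_mul_of_nonneg_left h4 (sub_nonneg.2 hξ)
  have h6 := mul_le_mul_of_nonneg_right hc (sub_nonneg.2 hab)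
  linarith

/-- The estimate `ΔL + ξ(ξ−1)|ε₁| ≤ 0` for the interaction of a shock `α` with a
rarefaction `β` of the same family. -/
theorem stmt8 (m ξ α β ε₁ ε₃ : ℝ) (hm : 0 < m)
    (hξ1 : 1 ≤ ξ) (hξ2 : ξ ≤ 1 / cfun m)
    (hα : α < 0) (hβ : 0 < β) (hαm : |α| ≤ m)
    (h1 : ε₃ - ε₁ = α + β)
    (h2 : hfun ε₁ + hfun ε₃ = hfun α + hfun β) :
    ξ * |ε₁| + (if ε₃ < 0 then ξ else 1) * |ε₃| - ξ * |α| - β + ξ * (ξ - 1) * |ε₁| ≤ 0 := by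
  have hcm : 1 < Real.cosh m := Real.one_lt_cosh.2 hm.ne'
  have hξm : (ξ - 1) * (Real.cosh m - 1) ≤ 2 := by
    unfold cfun at hξ2
    rw [one_div_div, le_div_iff₀ (by linarith)] at hξ2
    linarith
  have hca : Real.cosh (-α) ≤ Real.cosh m := by
    rw [Real.cosh_le_cosh, abs_neg, abs_of_pos hm]; exact hαm
  have hc : (ξ - 1) * (Real.cosh (-α) - 1) ≤ 2 :=
    (mul_le_mul_of_nonneg_left (by linarith) (sub_nonneg.2 hξ1)).trans hξm
  have hsα : Real.sinh α < α := Real.sinh_lt_self_iff.2 hα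
  have e1 : ε₁ < 0 := by
    by_contra hcon
    push Not at hcon
    unfold hfun at h2
    rw [if_pos hcon, if_neg (not_le.2 hα), if_pos hβ.le] at h2
    split_ifs at h2 with h3
    · linarith
    · have := Real.sinh_sub_id_strictMono (show α < ε₃ by linarith)
      simp only at this
      linarith
  unfold hfun at h2
  rw [if_neg (not_le.2 e1), if_neg (not_le.2 hα), if_pos hβ.le] at h2
  rw [abs_of_neg e1, abs_of_neg hα]
  by_cases h3 : ε₃ < 0
  · rw [if_neg (not_le.2 h3)] at h2
    rw [if_pos h3, abs_of_neg h3]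
    have := core_aux ξ (-α) (-ε₃) (-ε₁) hξ1 (by linarith) (by linarith) hc
      (by simp only [Real.sinh_neg]; linarith)
    have hβ' : β = ε₃ - ε₁ - α := by linarith
    subst hβ'
    nlinarith
  · rw [if_pos (not_lt.1 h3)] at h2
    rw [if_neg h3, abs_of_nonneg (not_lt.1 h3)]
    have := core_aux ξ (-α) 0 (-ε₁) hξ1 le_rfl (by linarith) hc
      (by simp only [Real.sinh_neg, Real.sinh_zero]; linarith)
    have hβ' : β = ε₃ - ε₁ - α := by linarith
    subst hβ'
    nlinarith
end

section
/- The function K defined by K(r) = (2/(1+r))·log(1 + (2/r)(1 + √(1+r))) is strictly decreasing on (0, +∞). -/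
/-- The threshold function `K(r) = (2/(1+r))·log(1 + (2/r)(1 + √(1+r)))`. -/
noncomputable def Kfun (r : ℝ) : ℝ :=
  (2 / (1 + r)) * Real.log (1 + (2 / r) * (1 + Real.sqrt (1 + r)))

lemma arg_eq (r : ℝ) (hr : 0 < r) :
    (2 / r) * (1 + Real.sqrt (1 + r)) = 2 / (Real.sqrt (1 + r) - 1) := by
  have h1 : 1 < Real.sqrt (1 + r) := by
    rw [Real.lt_sqrt (by norm_num)]; linarith
  have h2 : Real.sqrt (1 + r) ^ 2 = 1 + r := Real.sq_sqrt (by linarith)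
  have h3 : Real.sqrt (1 + r) - 1 ≠ 0 := by linarith
  rw [div_mul_eq_mul_div, div_eq_div_iff hr.ne' h3]
  linear_combination 2 * h2

/-- `K` is strictly decreasing on `(0, +∞)`. -/
theorem stmt9 : StrictAntiOn Kfun (Set.Ioi 0) := by
  intro a ha b hb hab
  have ha : 0 < a := ha
  have hb : 0 < b := hb
  unfold Kfun
  rw [arg_eq a ha, arg_eq b hb]
  have h1 : 1 < Real.sqrt (1 + a) := by
    rw [Real.lt_sqrt (by norm_num)]; linarith
  have h2 : Real.sqrt (1 + a) < Real.sqrt (1 + b) :=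
    Real.sqrt_lt_sqrt (by linarith) (by linarith)
  have h3 : 2 / (Real.sqrt (1 + b) - 1) < 2 / (Real.sqrt (1 + a) - 1) :=
    div_lt_div_of_pos_left (by norm_num) (by linarith) (by linarith)
  have h4 : 0 < 2 / (Real.sqrt (1 + b) - 1) := div_pos (by norm_num) (by linarith)
  have h5 : 2 / (1 + b) < 2 / (1 + a) :=
    div_lt_div_of_pos_left (by norm_num) (by linarith) (by linarith)
  have h6 : 0 < 2 / (1 + b) := by positivity
  have h7 : Real.log (1 + 2 / (Real.sqrt (1 + b) - 1))
      < Real.log (1 + 2 / (Real.sqrt (1 + a) - 1)) :=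
    Real.log_lt_log (by linarith) (by linarith)
  have h8 : 0 < Real.log (1 + 2 / (Real.sqrt (1 + b) - 1)) := Real.log_pos (by linarith)
  exact mul_lt_mul'' h5 h7 h6.le h8.le
end

section
/- For every m > 0, setting r = 2/(cosh m − 1) > 0, one has K(r) = 2m·(cosh m − 1)/(cosh m + 1). Equivalently, K = z ∘ w⁻¹ on (0, +∞), where w(m) = 2/(cosh m − 1) and z(m) = 2m·c(m) for m > 0. -/
/-- For `m > 0` and `r = 2/(cosh m − 1) > 0`, one has `K(r) = 2m(cosh m − 1)/(cosh m + 1)`,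
i.e. `K = z ∘ w⁻¹` with `w(m) = 2/(cosh m − 1)` and `z(m) = 2m·c(m)`. -/
theorem stmt12 (m : ℝ) (hm : 0 < m) :
    0 < 2 / (Real.cosh m - 1) ∧
    Kfun (2 / (Real.cosh m - 1)) = 2 * m * (Real.cosh m - 1) / (Real.cosh m + 1) := by
  have hc : 0 < Real.cosh m - 1 := by
    have := Real.one_lt_cosh.mpr hm.ne'
    linarith
  have hs : 0 < Real.sinh m := Real.sinh_pos_iff.mpr hm
  refine ⟨by positivity, ?_⟩
  have h1 : 1 + 2 / (Real.cosh m - 1) = (Real.cosh m + 1) / (Real.cosh m - 1) := by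
    field_simp
    ring
  have h2 : Real.sqrt ((Real.cosh m + 1) / (Real.cosh m - 1))
      = Real.sinh m / (Real.cosh m - 1) := by
    rw [show (Real.cosh m + 1) / (Real.cosh m - 1) = (Real.sinh m / (Real.cosh m - 1)) ^ 2 by
      rw [div_pow, Real.sinh_sq]
      field_simp
      ring]
    exact Real.sqrt_sq (by positivity)
  have h3 : 1 + 2 / (2 / (Real.cosh m - 1)) * (1 + Real.sinh m / (Real.cosh m - 1))
      = Real.exp m := by
    rw [← Real.cosh_add_sinh]
    field_simp
    ring
  unfold Kfun
  rw [h1, h2, h3, Real.log_exp]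
  have : 0 < Real.cosh m + 1 := by linarith
  field_simp
end

section
/- Let h > 0 and let T be a real number with T < K(h). Then there exists m > 0 such that h < 2/(cosh m − 1) and T < 2m·(cosh m − 1)/(cosh m + 1). -/
/-- Choice of the parameter `m₀` in the final step of the existence proof. -/
theorem stmt13 (h T : ℝ) (hh : 0 < h) (hT : T < Kfun h) :
    ∃ m : ℝ, 0 < m ∧ h < 2 / (Real.cosh m - 1) ∧
      T < 2 * m * (Real.cosh m - 1) / (Real.cosh m + 1) := by
  have hs0 : 0 ≤ Real.sqrt (1 + h) := Real.sqrt_nonneg _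
  have hs2 : Real.sqrt (1 + h) ^ 2 = 1 + h := Real.sq_sqrt (by linarith)
  unfold Kfun at hT
  set s := Real.sqrt (1 + h) with hs
  set X := 1 + (2 / h) * (1 + s) with hX
  have hX1 : 1 < X := by
    have : 0 < (2 / h) * (1 + s) := by positivity
    linarith
  have hX0 : 0 < X := by linarith
  set M := Real.log X with hM
  have hMpos : 0 < M := Real.log_pos hX1
  have hcosh : Real.cosh M = 1 + 2 / h := by
    rw [hM, Real.cosh_log hX0]
    have hq : X ^ 2 + 1 = (2 + 4 / h) * X := by
      rw [hX]
      field_simp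
      linear_combination 4 * hs2
    field_simp
    field_simp at hq
    linear_combination hq
  have hval : 2 / (1 + h) * M = 2 * M * (Real.cosh M - 1) / (Real.cosh M + 1) := by
    rw [hcosh]
    have h1 : (1 + 2 / h + 1) ≠ 0 := by positivity
    field_simp
    ring
  have hcont : ContinuousAt
      (fun m : ℝ => 2 * m * (Real.cosh m - 1) / (Real.cosh m + 1)) M := by
    have h1 : Real.cosh M + 1 ≠ 0 := by
      have := Real.cosh_pos M
      positivity
    have hc := Real.continuous_cosh.continuousAt (x := M)
    exact ((continuousAt_const.mul continuousAt_id).mul (hc.sub continuousAt_const)).div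
      (hc.add continuousAt_const) h1
  rw [hval] at hT
  have hev := (hcont.eventually (lt_mem_nhds hT)).filter_mono
    (nhdsWithin_le_nhds (s := Set.Iio M))
  have hpos : ∀ᶠ m in nhdsWithin M (Set.Iio M), 0 < m :=
    (lt_mem_nhds hMpos).filter_mono nhdsWithin_le_nhds
  obtain ⟨m, ⟨hm1, hm2⟩, hm3⟩ := ((hev.and hpos).and self_mem_nhdsWithin).exists
  have hm3 : m < M := hm3
  refine ⟨m, hm2, ?_, hm1⟩
  have hlt : Real.cosh m < Real.cosh M := by
    rw [Real.cosh_lt_cosh, abs_of_pos hm2, abs_of_pos hMpos]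
    exact hm3
  have h1 : 1 < Real.cosh m := Real.one_lt_cosh.2 hm2.ne'
  have h2 : Real.cosh m - 1 < 2 / h := by linarith
  rw [lt_div_iff₀ (by linarith)]
  rw [lt_div_iff₀ hh] at h2
  linarith
end

section
/- For all real numbers x, y with x ≥ 0, y ≥ 0 and x + y < 1/2, one has H_b(x, y) ≤ x + y. -/
/-- The stability function `H_b` of the bubble case. -/
noncomputable def Hb (x y : ℝ) : ℝ :=
  (4 / (4 - x * y)) * max (x * (2 + y) / (2 - y)) (y * (2 + x) / (2 - x))

theorem Hb_aux (x y : ℝ) (hx : 0 ≤ x) (hy : 0 ≤ y) (hxy : x + y < 1 / 2) :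
    (4 / (4 - x * y)) * (x * (2 + y) / (2 - y)) ≤ x + y := by
  have h1 : 0 < 2 - y := by linarith
  have h2 : 0 < 4 - x * y := by nlinarith
  rw [div_mul_div_comm, div_le_iff₀ (mul_pos h2 h1)]
  have hxy0 : 0 ≤ x * y := mul_nonneg hx hy
  have h3 : x * (x + y) ≤ 1 := by nlinarith
  have h4 : 0 ≤ 8 - 8 * x - 4 * y - 2 * (x * (x + y)) + x * y * (x + y) := by
    have := mul_nonneg hxy0 (add_nonneg hx hy)
    linarith
  nlinarith [mul_nonneg hy h4]

/-- `H_b(x,y) ≤ x + y` for `x, y ≥ 0` with `x + y < 1/2`. -/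
theorem stmt14 (x y : ℝ) (hx : 0 ≤ x) (hy : 0 ≤ y) (hxy : x + y < 1 / 2) :
    Hb x y ≤ x + y := by
  unfold Hb
  rcases max_choice (x * (2 + y) / (2 - y)) (y * (2 + x) / (2 - x)) with h | h
  · rw [h]
    exact Hb_aux x y hx hy hxy
  · rw [h, mul_comm x y, add_comm x y]
    exact Hb_aux y x hy hx (by linarith)
end

section
/- Let ξ ≥ 1, let 0 ≤ x < 2 and 0 ≤ y < 2 with ξ·x·y < 4, and let K_η, K_ζ be real numbers satisfying K_η ≥ 1 + K_ζ·y/2 and K_ζ ≥ (ξ − 1)/2 + ξ·K_η·x/2. Then K_η ≥ (1 + (ξ − 1)y/4)/(1 − ξxy/4) and K_ζ ≥ ((ξ − 1) + ξx)/(2(1 − ξxy/4)). -/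
/-- Lower bounds on the interaction-potential weights in the increasing-pressure case. -/
theorem stmt18 (ξ x y Kη Kζ : ℝ) (hξ : 1 ≤ ξ)
    (hx : 0 ≤ x) (hx2 : x < 2) (hy : 0 ≤ y) (hy2 : y < 2)
    (hξxy : ξ * x * y < 4)
    (h1 : Kη ≥ 1 + Kζ * y / 2) (h2 : Kζ ≥ (ξ - 1) / 2 + ξ * Kη * x / 2) :
    Kη ≥ (1 + (ξ - 1) * y / 4) / (1 - ξ * x * y / 4) ∧
    Kζ ≥ ((ξ - 1) + ξ * x) / (2 * (1 - ξ * x * y / 4)) := by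
  have hD : 0 < 1 - ξ * x * y / 4 := by linarith
  have hξx : 0 ≤ ξ * x := mul_nonneg (by linarith) hx
  have e1 := mul_le_mul_of_nonneg_right h2 hy
  have e2 := mul_le_mul_of_nonneg_left h1 hξx
  constructor
  · rw [ge_iff_le, div_le_iff₀ hD]
    linarith
  · rw [ge_iff_le, div_le_iff₀ (by linarith)]
    linarith
end

section
/- Let 0 < x < 2 and 0 < y < 2, and set a = xy(2 − x)/4, b = y(x + 1) − (2 − x)(1 − xy/4), c = xy. Assume that b + xy·√(2 − x) < 0. Then b² − 4ac > 0; the two roots z₁ = (−b − √(b² − 4ac))/(2a) and z₂ = (−b + √(b² − 4ac))/(2a) satisfy 0 < z₁ < z₂; and for every real z, a·z² + b·z + c ≤ 0 if and only if z₁ ≤ z ≤ z₂. -/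
/-- Analysis of the quadratic inequality (in `z = ξ − 1`) arising in the
increasing-pressure case. -/
theorem stmt19 (x y a b c : ℝ) (hx : 0 < x) (hx2 : x < 2) (hy : 0 < y) (hy2 : y < 2)
    (ha : a = x * y * (2 - x) / 4)
    (hb : b = y * (x + 1) - (2 - x) * (1 - x * y / 4))
    (hc : c = x * y)
    (hdom : b + x * y * Real.sqrt (2 - x) < 0) :
    0 < b ^ 2 - 4 * a * c ∧
    (let z₁ := (-b - Real.sqrt (b ^ 2 - 4 * a * c)) / (2 * a)
     let z₂ := (-b + Real.sqrt (b ^ 2 - 4 * a * c)) / (2 * a)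
     0 < z₁ ∧ z₁ < z₂ ∧ ∀ z : ℝ, a * z ^ 2 + b * z + c ≤ 0 ↔ z₁ ≤ z ∧ z ≤ z₂) := by
  have hs := Real.sqrt_nonneg (2 - x)
  have hs2 := Real.sq_sqrt (show (0:ℝ) ≤ 2 - x by linarith)
  have hxy : 0 < x * y := mul_pos hx hy
  have ha0 : 0 < a := by
    rw [ha]
    have := mul_pos hxy (sub_pos.2 hx2)
    linarith
  have hc0 : 0 < c := by rw [hc]; exact hxy
  have hm : 0 ≤ x * y * Real.sqrt (2 - x) := mul_nonneg hxy.le hs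
  have hac : 4 * a * c = (x * y * Real.sqrt (2 - x)) ^ 2 := by
    rw [mul_pow, hs2, ha, hc]; ring
  have hb0 : b < 0 := by linarith
  have hD : 0 < b ^ 2 - 4 * a * c := by
    rw [hac]; nlinarith
  clear hac hm hdom hs hs2 ha hb hc
  refine ⟨hD, ?_⟩
  intro z₁ z₂
  have hr := Real.sqrt_pos.2 hD
  have hr2 := Real.sq_sqrt hD.le
  have h2a : 0 < 2 * a := by linarith
  have hacp := mul_pos ha0 hc0
  refine ⟨?_, ?_, ?_⟩
  · apply div_pos _ h2a
    nlinarith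
  · apply div_lt_div_of_pos_right _ h2a
    linarith
  · intro z
    simp only [z₁, z₂]
    rw [div_le_iff₀ h2a, le_div_iff₀ h2a]
    generalize Real.sqrt (b ^ 2 - 4 * a * c) = r at *
    have key : 4 * a * (a * z ^ 2 + b * z + c) = (z * (2 * a) + b) ^ 2 - r ^ 2 := by
      rw [hr2]; ring
    constructor
    · intro h
      have h1 : 4 * a * (a * z ^ 2 + b * z + c) ≤ 0 :=
        mul_nonpos_of_nonneg_of_nonpos (by linarith) h
      have h2 := abs_le_of_sq_le_sq' (show (z * (2 * a) + b) ^ 2 ≤ r ^ 2 by linarith) hr.le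
      constructor <;> linarith [h2.1, h2.2]
    · rintro ⟨h1, h2⟩
      have h3 : (z * (2 * a) + b) ^ 2 ≤ r ^ 2 :=
        sq_le_sq' (by linarith) (by linarith)
      by_contra hn
      have := mul_pos (show 0 < 4 * a by linarith) (not_le.1 hn)
      linarith
end
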